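/- arXiv:math/9908136 — 7 statements merged into one kernel-verified Lean document; each statement's English description precedes it below -/
import Mathlib

section
/- Let E be a finite-dimensional real vector space. Let g : ℝ → (E →ₗ[ℝ] E →ₗ[ℝ] ℝ) be a family of symmetric positive-definite bilinear forms (inner products) on E such that for all x, y ∈ E the function s ↦ g s x y is differentiable. Let d : E →ₗ[ℝ] E be a fixed linear map, and let dstar : ℝ → (E →ₗ[ℝ] E) be a family of linear maps, differentiable in s, such that for all s and all x, y ∈ E one has g s (dstar s x) y = g s x (d y) (i.e. dstar s is the g s-adjoint of d). Let Z : ℝ → (E →ₗ[ℝ] E) satisfy, for all s and all x, y ∈ E, deriv (fun t => g t x y) s = g s (Z s x) y. Then for every s, deriv dstar s = dstar s ∘ Z s − Z s ∘ dstar s, i.e. the derivative of the adjoint is the commutator [dstar s, Z s]. -/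
/-!
Differentiating the adjunction `g t (dstar t x) y = g t x (d y)` at `t = s` gives
`g s (Z s (dstar s x)) y + g s (dstar' x) y = g s (Z s x) (d y) = g s (dstar s (Z s x)) y`,
and nondegeneracy of `g s` isolates `dstar' x`. The map `dstar` is differentiable because `dstar t x`
solves a linear equation with differentiable coefficients, and inversion of operators is
differentiable.
-/

open scoped Filter Topology

section ImplicitLinearEquation

variable {𝕜 E F : Type*} [NontriviallyNormedField 𝕜]
  [NormedAddCommGroup E] [NormedSpace 𝕜 E] [NormedAddCommGroup F] [NormedSpace 𝕜 F]

theorem hasDerivAt_of_clm_apply_eq_of_eq_one [CompleteSpace E]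
    {B : 𝕜 → E →L[𝕜] E} {B' : E →L[𝕜] E} {u f : 𝕜 → E} {f' : E} {s : 𝕜}
    (hB : HasDerivAt B B' s) (hf : HasDerivAt f f' s) (hBs : B s = 1)
    (hu : ∀ᶠ t in 𝓝 s, B t (u t) = f t) :
    HasDerivAt u (f' - B' (u s)) s := by
  have hinv : HasDerivAt (fun t => Ring.inverse (B t)) (-B') s := by
    have h := hasFDerivAt_ringInverse (𝕜 := 𝕜) (1 : (E →L[𝕜] E)ˣ)
    rw [Units.val_one, ← hBs] at h
    refine (h.comp_hasDerivAt s hB).congr_deriv ?_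
    ext x
    simp
  have hunit : ∀ᶠ t in 𝓝 s, IsUnit (B t) :=
    hB.continuousAt.eventually (hBs ▸ Units.nhds (1 : (E →L[𝕜] E)ˣ))
  have hsolve : u =ᶠ[𝓝 s] fun t => Ring.inverse (B t) (f t) := by
    filter_upwards [hunit, hu] with t ht hut
    rw [← hut, ← mul_apply_eq_comp, Ring.inverse_mul_cancel _ ht, one_apply_eq_self]
  have hfs : f s = u s := by simpa [hBs] using hu.self_of_nhds.symm
  refine ((hinv.clm_apply hf).congr_of_eventuallyEq hsolve).congr_deriv ?_
  simp [hBs, hfs, sub_eq_neg_add]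

theorem hasDerivAt_of_clm_apply_eq [CompleteSpace E]
    {A : 𝕜 → E →L[𝕜] F} {A' : E →L[𝕜] F} {u : 𝕜 → E} {f : 𝕜 → F} {u' : E} {f' : F} {s : 𝕜}
    (hA : HasDerivAt A A' s) (hf : HasDerivAt f f' s) (hAs : (A s).HasLeftInverse)
    (hu : ∀ᶠ t in 𝓝 s, A t (u t) = f t) (hu' : A' (u s) + A s u' = f') :
    HasDerivAt u u' s := by
  obtain ⟨P, hP⟩ := hAs
  have hPA : HasDerivAt (fun t => P ∘L A t) (P ∘L A') s := by
    simpa using (hasDerivAt_const s P).clm_comp hA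
  have hPf : HasDerivAt (fun t => P (f t)) (P f') s := P.hasFDerivAt.comp_hasDerivAt s hf
  refine (hasDerivAt_of_clm_apply_eq_of_eq_one hPA hPf
    (ContinuousLinearMap.ext hP) (hu.mono fun t ht => congrArg P ht)).congr_deriv ?_
  rw [← hu', map_add, hP u', ContinuousLinearMap.comp_apply, add_sub_cancel_left]

theorem hasDerivAt_clm_iff_forall_apply [CompleteSpace 𝕜] [FiniteDimensional 𝕜 E]
    {A : 𝕜 → E →L[𝕜] F} {A' : E →L[𝕜] F} {s : 𝕜} :
    HasDerivAt A A' s ↔ ∀ x, HasDerivAt (fun t => A t x) (A' x) s := by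
  refine ⟨fun h x => by simpa using h.clm_apply (hasDerivAt_const s x), fun h => ?_⟩
  let b := Module.finBasis 𝕜 E
  have hexpand (L : E →L[𝕜] F) :
      L = ∑ i,
        ContinuousLinearMap.smulRightL 𝕜 E F (b.coord i).toContinuousLinearMap (L (b i)) := by
    ext x
    conv_lhs => rw [← b.sum_repr x, map_sum]
    simp
  rw [hexpand A', funext fun t => hexpand (A t)]
  exact HasDerivAt.fun_sum fun i _ =>
    (ContinuousLinearMap.hasFDerivAt _).comp_hasDerivAt s (h (b i))

end ImplicitLinearEquation

section VaryingBilinearForm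

variable {𝕜 E F : Type*} [NontriviallyNormedField 𝕜] [CompleteSpace 𝕜]
  [NormedAddCommGroup E] [NormedSpace 𝕜 E] [FiniteDimensional 𝕜 E]

theorem hasDerivAt_of_bilin_apply_eq
    {g : 𝕜 → E →ₗ[𝕜] E →ₗ[𝕜] 𝕜} {g' : E →ₗ[𝕜] E →ₗ[𝕜] 𝕜} {φ : 𝕜 → E →ₗ[𝕜] 𝕜} {φ' : E →ₗ[𝕜] 𝕜}
    {u : 𝕜 → E} {u' : E} {s : 𝕜}
    (hg : ∀ x y, HasDerivAt (fun t => g t x y) (g' x y) s)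
    (hφ : ∀ y, HasDerivAt (fun t => φ t y) (φ' y) s) (hgs : (g s).SeparatingLeft)
    (hu : ∀ᶠ t in 𝓝 s, g t (u t) = φ t) (hu' : g' (u s) + g s u' = φ') :
    HasDerivAt u u' s := by
  have : CompleteSpace E := FiniteDimensional.complete 𝕜 E
  have hgL : HasDerivAt (fun t => (g t).toContinuousBilinearMap) g'.toContinuousBilinearMap s :=
    hasDerivAt_clm_iff_forall_apply.2 fun x => hasDerivAt_clm_iff_forall_apply.2 (hg x)
  have hφL : HasDerivAt (fun t => (φ t).toContinuousLinearMap) φ'.toContinuousLinearMap s :=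
    hasDerivAt_clm_iff_forall_apply.2 hφ
  have hinj : Function.Injective (g s).toContinuousBilinearMap :=
    (injective_iff_map_eq_zero _).2 fun x hx => hgs x fun y => DFunLike.congr_fun hx y
  exact hasDerivAt_of_clm_apply_eq hgL hφL (.of_injective_of_finiteDimensional hinj)
    (hu.mono fun t ht => congrArg LinearMap.toContinuousLinearMap ht)
    (congrArg LinearMap.toContinuousLinearMap hu')

theorem stmt_0_general [AddCommGroup F] [Module 𝕜 F]
    {g : 𝕜 → E →ₗ[𝕜] E →ₗ[𝕜] 𝕜} {h : 𝕜 → F →ₗ[𝕜] F →ₗ[𝕜] 𝕜} {d : E →ₗ[𝕜] F}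
    {dstar : 𝕜 → F →ₗ[𝕜] E} {Z : E →ₗ[𝕜] E} {W : F →ₗ[𝕜] F} {s : 𝕜}
    (hgs : (g s).SeparatingLeft)
    (hadj : ∀ᶠ t in 𝓝 s, ∀ x y, g t (dstar t x) y = h t x (d y))
    (hZ : ∀ x y, HasDerivAt (fun t => g t x y) (g s (Z x) y) s)
    (hW : ∀ x y, HasDerivAt (fun t => h t x y) (h s (W x) y) s) (x : F) :
    HasDerivAt (fun t => dstar t x) (dstar s (W x) - Z (dstar s x)) s := by
  refine hasDerivAt_of_bilin_apply_eq (g' := g s ∘ₗ Z) (φ := fun t => h t x ∘ₗ d)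
    (φ' := h s (W x) ∘ₗ d) hZ (fun y => hW x (d y)) hgs
    (hadj.mono fun t ht => LinearMap.ext (ht x)) ?_
  rw [LinearMap.comp_apply, ← map_add, add_sub_cancel]
  exact LinearMap.ext (hadj.self_of_nhds (W x))

end VaryingBilinearForm

/-- Abstract form of the first Lemma of Section 2 of Lott,
"On the Spectrum of a Finite-Volume Negatively-Curved Manifold":
if `g s` is a smoothly varying family of inner products on a
finite-dimensional real vector space `E`, `d` is a fixed linear map,
`dstar s` is the `g s`-adjoint of `d`, and `Z s` represents the derivative
of `g` (i.e. `∂_s g(x,y) = g(Z x, y)`), then `∂_s dstar = dstar ∘ Z − Z ∘ dstar`,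
the commutator `[dstar, Z]` (stated pointwise, applied to each vector `x`). -/
theorem stmt_0 {E : Type*} [NormedAddCommGroup E] [NormedSpace ℝ E]
    [FiniteDimensional ℝ E]
    (g : ℝ → (E →ₗ[ℝ] E →ₗ[ℝ] ℝ)) (d : E →ₗ[ℝ] E) (dstar Z : ℝ → (E →ₗ[ℝ] E))
    (hsymm : ∀ s (x y : E), g s x y = g s y x)
    (hpos : ∀ s (x : E), x ≠ 0 → 0 < g s x x)
    (hgdiff : ∀ x y : E, Differentiable ℝ (fun s => g s x y))
    (hdstardiff : ∀ x : E, Differentiable ℝ (fun s => dstar s x))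
    (hadj : ∀ s (x y : E), g s (dstar s x) y = g s x (d y))
    (hZ : ∀ s (x y : E), deriv (fun t => g t x y) s = g s (Z s x) y) :
    ∀ s (x : E), deriv (fun t => dstar t x) s =
      dstar s (Z s x) - Z s (dstar s x) := by
  intro s x
  have hg (u v : E) : HasDerivAt (fun t => g t u v) (g s (Z s u) v) s :=
    hZ s u v ▸ (hgdiff u v s).hasDerivAt
  exact (stmt_0_general (fun v hv => by_contra fun hv0 => (hpos s v hv0).ne' (hv v))
    (.of_forall hadj) hg hg x).deriv
end

section
/- Let E be a real Banach space and let G, Δ : ℝ → (E →L[ℝ] E) be operator-valued functions that are differentiable (in operator norm) at every s, and let P : E →L[ℝ] E be a fixed continuous linear operator. Suppose that for every s one has Δ s ∘ G s = G s ∘ Δ s = 1 − P and P ∘ G s = G s ∘ P = 0, where 1 denotes the identity operator. Then for every s, deriv G s = −(G s ∘ (deriv Δ s) ∘ G s). -/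
/-!
Two Green's operators `g`, `g'` of `d`, `d'` relative to the same projection satisfy the
resolvent identity `g' - g = g' (d - d') g`. It bounds `‖g'‖` by `2 ‖g‖` as soon as
`‖d' - d‖ ‖g‖ ≤ 1 / 2`, so `g` depends continuously on `d`. Dividing the identity by the
increment of the parameter and passing to the limit then gives both the existence and the value
of the derivative.
-/

open Filter Topology

/-- `g` is the Green's operator (partial inverse) of the "Laplacian" `d` relative to the projection
`p`. The remaining relation `g * p = 0` is `IsGreenOperator.mul_proj`, and `p` is idempotent because
`p * (1 - p) = p * g * d = 0`. -/
structure IsGreenOperator {R : Type*} [Ring R] (p d g : R) : Prop where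
  laplacian_mul : d * g = 1 - p
  mul_laplacian : g * d = 1 - p
  proj_mul : p * g = 0

namespace IsGreenOperator

section Ring

variable {R : Type*} [Ring R] {p d d' g g' : R}

lemma mul_laplacian_mul (h : IsGreenOperator p d g) : g * d * g = g := by
  rw [h.mul_laplacian, sub_mul, one_mul, h.proj_mul, sub_zero]

lemma mul_proj (h : IsGreenOperator p d g) : g * p = 0 := by
  rw [← sub_sub_cancel 1 p, ← h.laplacian_mul, mul_sub, mul_one, ← mul_assoc,
    h.mul_laplacian_mul, sub_self]

lemma sub_eq_mul_sub_mul (h : IsGreenOperator p d g) (h' : IsGreenOperator p d' g') :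
    g' - g = g' * (d - d') * g := by
  have left : g' * d * g = g' := by
    rw [mul_assoc, h.laplacian_mul, mul_sub, mul_one, h'.mul_proj, sub_zero]
  have right : g' * d' * g = g := by
    rw [h'.mul_laplacian, sub_mul, one_mul, h.proj_mul, sub_zero]
  rw [mul_sub, sub_mul, left, right]

end Ring

section Norm

variable {R : Type*} [SeminormedRing R] {p d d' g g' : R}

lemma norm_sub_le_norm_mul (h : IsGreenOperator p d g) (h' : IsGreenOperator p d' g') :
    ‖g' - g‖ ≤ ‖g'‖ * (‖d' - d‖ * ‖g‖) :=
  calc ‖g' - g‖ = ‖g' * (d - d') * g‖ := by rw [h.sub_eq_mul_sub_mul h']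
    _ ≤ ‖g'‖ * ‖d - d'‖ * ‖g‖ := norm_mul₃_le
    _ = ‖g'‖ * (‖d' - d‖ * ‖g‖) := by rw [norm_sub_rev, mul_assoc]

lemma norm_le_two_mul (h : IsGreenOperator p d g) (h' : IsGreenOperator p d' g')
    (hd : ‖d' - d‖ * ‖g‖ ≤ 1 / 2) : ‖g'‖ ≤ 2 * ‖g‖ := by
  have hsub : ‖g' - g‖ ≤ ‖g'‖ * (1 / 2) :=
    (h.norm_sub_le_norm_mul h').trans (by gcongr)
  linarith [norm_le_norm_add_norm_sub' g' g]

theorem tendsto {ι : Type*} {l : Filter ι} {D G : ι → R} (h : IsGreenOperator p d g)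
    (hG : ∀ᶠ i in l, IsGreenOperator p (D i) (G i)) (hD : Tendsto D l (𝓝 d)) :
    Tendsto G l (𝓝 g) := by
  have hsmall : Tendsto (fun i ↦ ‖D i - d‖ * ‖g‖) l (𝓝 0) := by
    simpa only [zero_mul] using (tendsto_iff_norm_sub_tendsto_zero.1 hD).mul_const ‖g‖
  have hbound : ∀ᶠ i in l, ‖G i - g‖ ≤ 2 * ‖g‖ * (‖D i - d‖ * ‖g‖) := by
    filter_upwards [hG, hsmall.eventually_le_const one_half_pos] with i hi hle
    exact (h.norm_sub_le_norm_mul hi).trans (by gcongr; exact h.norm_le_two_mul hi hle)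
  refine tendsto_iff_norm_sub_tendsto_zero.2
    (squeeze_zero' (.of_forall fun _ ↦ norm_nonneg _) hbound ?_)
  simpa only [mul_zero] using hsmall.const_mul (2 * ‖g‖)

end Norm

lemma slope_eq {𝕜 R : Type*} [Field 𝕜] [Ring R] [Algebra 𝕜 R] {p : R} {D G : 𝕜 → R} {s t : 𝕜}
    (hs : IsGreenOperator p (D s) (G s)) (ht : IsGreenOperator p (D t) (G t)) :
    slope G s t = -(G t * (slope D s t * G s)) := by
  rw [slope_def_module, slope_def_module, hs.sub_eq_mul_sub_mul ht, ← neg_sub (D t), mul_neg,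
    neg_mul, smul_neg, smul_mul_assoc, mul_smul_comm, mul_assoc]

end IsGreenOperator

theorem stmt_1_general {𝕜 R : Type*} [NontriviallyNormedField 𝕜] [NormedRing R]
    [NormedAlgebra 𝕜 R] {D G : 𝕜 → R} {D' p : R} {s : 𝕜} (hD : HasDerivAt D D' s)
    (hG : ∀ᶠ t in 𝓝 s, IsGreenOperator p (D t) (G t)) :
    HasDerivAt G (-(G s * (D' * G s))) s := by
  have hs : IsGreenOperator p (D s) (G s) := hG.self_of_nhds
  have hcont : Tendsto G (𝓝[≠] s) (𝓝 (G s)) :=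
    (hs.tendsto hG hD.continuousAt).mono_left nhdsWithin_le_nhds
  have hslope : slope G s =ᶠ[𝓝[≠] s] fun t ↦ -(G t * (slope D s t * G s)) :=
    (hG.filter_mono nhdsWithin_le_nhds).mono fun _ ht ↦ hs.slope_eq ht
  rw [hasDerivAt_iff_tendsto_slope] at hD ⊢
  exact (hcont.mul (hD.mul_const (G s))).neg.congr' hslope.symm

/-- Derivative formula for the Green's operator (Section 2 of Lott,
"On the Spectrum of a Finite-Volume Negatively-Curved Manifold"):
if `Δ s ∘ G s = G s ∘ Δ s = 1 − P` and `P ∘ G s = G s ∘ P = 0` for a fixed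
projection `P`, with `G` and `Δ` differentiable in operator norm, then
`∂_s G = −G (∂_s Δ) G`. -/
theorem stmt_1 {E : Type*} [NormedAddCommGroup E] [NormedSpace ℝ E]
    [CompleteSpace E]
    (G Δ : ℝ → (E →L[ℝ] E)) (P : E →L[ℝ] E)
    (hG : Differentiable ℝ G) (hΔ : Differentiable ℝ Δ)
    (hΔG : ∀ s, (Δ s).comp (G s) = 1 - P)
    (hGΔ : ∀ s, (G s).comp (Δ s) = 1 - P)
    (hPG : ∀ s, P.comp (G s) = 0)
    (hGP : ∀ s, (G s).comp P = 0) :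
    ∀ s, deriv G s = -((G s).comp ((deriv Δ s).comp (G s))) := by
  intro s
  exact (stmt_1_general (hΔ s).hasDerivAt
    (.of_forall fun t ↦ ⟨hΔG t, hGΔ t, hPG t⟩)).deriv
end

section
/- Let E be a real Banach space. Let d, P : E →L[ℝ] E be fixed continuous linear operators, and let dstar, G, V : ℝ → (E →L[ℝ] E) be operator-valued functions with dstar and G differentiable (in operator norm) at every s. For each s put Δ s = d ∘ dstar s + dstar s ∘ d. Assume that for every s: (i) d ∘ d = 0 and dstar s ∘ dstar s = 0; (ii) Δ s ∘ G s = G s ∘ Δ s = 1 − P and P ∘ G s = G s ∘ P = 0; (iii) G s commutes with d and with dstar s, and P commutes with dstar s and with V s; (iv) deriv dstar s = dstar s ∘ V s − V s ∘ dstar s. Then for every s, deriv (fun t => dstar t ∘ G t) s = −(d ∘ W s − W s ∘ d), where W s = G s ∘ dstar s ∘ V s ∘ dstar s ∘ G s. -/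
/-!
Since `P` does not vary, `G t - G s = -G t (Δ t - Δ s) G s`, so `G` is differentiable wherever `Δ`
is, with `G' = -G Δ' G`. As `δ` and `G` commute with one another and `G` commutes with `d`, one has
`δ G d = 1 - P - d G δ`; inserting this into `(δ G)' = δ' G - δ G (d δ' + δ' d) G` gives
`(δ G)' = P δ' G + [d, G δ δ' G]`. The first term vanishes because `δ'`, like `δ`, commutes with
`P`, and `δ² = 0` turns `δ δ' = δ [δ, V]` into `-δ V δ`.
-/

open Filter Asymptotics Topology

section Ring

variable {A : Type*} [Ring A]

/-- The Hodge Laplacian `d δ + δ d` of a differential `d` and a codifferential `δ`, given as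
elements of an arbitrary ring of operators. -/
def hodgeLaplacian (d δ : A) : A :=
  d * δ + δ * d

/-- `G` is a Green's operator of `Δ` relative to `P`: it inverts `Δ` modulo `P` and is annihilated
by `P`, so that `P` is idempotent. In Hodge theory `P` is the projection onto the kernel of `Δ`; the
relation `Δ * P = 0` is not part of the encoding. -/
structure IsGreenOperator_s2 (Δ P G : A) : Prop where
  laplacian_mul : Δ * G = 1 - P
  mul_laplacian : G * Δ = 1 - P
  proj_mul : P * G = 0

namespace IsGreenOperator_s2

variable {Δ Δ' P G G' x : A}

theorem mul_proj_s2 (h : IsGreenOperator_s2 Δ P G) : G * P = 0 := by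
  have hassoc : G * (1 - P) = (1 - P) * G := by
    rw [← h.laplacian_mul, ← mul_assoc, h.mul_laplacian, h.laplacian_mul]
  simpa [mul_sub, sub_mul, h.proj_mul] using hassoc

theorem commute_proj (h : IsGreenOperator_s2 Δ P G) (hΔ : Commute Δ x) (hG : Commute G x) :
    Commute P x := by
  rw [← sub_sub_cancel 1 P, ← h.laplacian_mul]
  exact (Commute.one_left x).sub_left (hΔ.mul_left hG)

theorem sub_eq_mul_sub_mul_s2 (h : IsGreenOperator_s2 Δ P G) (h' : IsGreenOperator_s2 Δ' P G') :
    G - G' = G' * (Δ' - Δ) * G :=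
  calc
    G - G' = (1 - P) * G - G' * (1 - P) := by
      simp only [sub_mul, mul_sub, one_mul, mul_one, h.proj_mul, h'.mul_proj_s2, sub_zero]
    _ = G' * Δ' * G - G' * (Δ * G) := by rw [h'.mul_laplacian, h.laplacian_mul]
    _ = G' * (Δ' - Δ) * G := by noncomm_ring

end IsGreenOperator_s2

variable {d δ δ' P G V : A}

theorem commute_hodgeLaplacian_of_mul_self_eq_zero (hδ : δ * δ = 0) :
    Commute (hodgeLaplacian d δ) δ := by
  simp only [Commute, SemiconjBy, hodgeLaplacian, add_mul, mul_add, mul_assoc, hδ, mul_zero,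
    zero_add]
  rw [← mul_assoc δ δ d, hδ, zero_mul, add_zero]

theorem mul_lie_self_of_mul_self_eq_zero (hδ : δ * δ = 0) : δ * ⁅δ, V⁆ = -(δ * V * δ) := by
  rw [Ring.lie_def, mul_sub, ← mul_assoc, hδ, zero_mul, zero_sub, mul_assoc]

theorem IsGreenOperator_s2.mul_sub_mul_hodgeLaplacian_mul
    (h : IsGreenOperator_s2 (hodgeLaplacian d δ) P G) (hd : Commute G d) (hδ : Commute G δ)
    (hP : Commute P δ') :
    δ' * G - δ * (G * hodgeLaplacian d δ' * G) = ⁅d, G * (δ * δ') * G⁆ := by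
  have hδGd : δ * G * d = 1 - P - d * (G * δ) := by
    rw [← h.laplacian_mul, hodgeLaplacian, add_mul, mul_assoc d, mul_assoc δ d, mul_assoc, hd.eq,
      hδ.eq, add_sub_cancel_left]
  have hPδ'G : P * δ' * G = 0 := by rw [hP.eq, mul_assoc, h.proj_mul, mul_zero]
  calc
    δ' * G - δ * (G * hodgeLaplacian d δ' * G)
        = δ' * G - (δ * G * d) * δ' * G - (δ * G) * δ' * (d * G) := by
      rw [hodgeLaplacian]; noncomm_ring
    _ = P * δ' * G + (d * (G * (δ * δ') * G) - G * (δ * δ') * G * d) := by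
      rw [hδGd, ← hd.eq, ← hδ.eq]; noncomm_ring
    _ = ⁅d, G * (δ * δ') * G⁆ := by rw [hPδ'G, zero_add, Ring.lie_def]

end Ring

theorem IsGreenOperator_s2.tendsto {ι A : Type*} [NormedRing A] {l : Filter ι} {Δ G : ι → A}
    {Δ₀ G₀ P : A} (h₀ : IsGreenOperator_s2 Δ₀ P G₀) (h : ∀ᶠ i in l, IsGreenOperator_s2 (Δ i) P (G i))
    (hΔ : Tendsto Δ l (𝓝 Δ₀)) : Tendsto G l (𝓝 G₀) := by
  have hsub : (fun i => G₀ - G i) =ᶠ[l] fun i => G i * ((Δ i - Δ₀) * G₀) := by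
    filter_upwards [h] with i hi
    rw [h₀.sub_eq_mul_sub_mul_s2 hi, mul_assoc]
  have hfactor : (fun i => (Δ i - Δ₀) * G₀) =o[l] fun _ => (1 : ℝ) := by
    rw [isLittleO_one_iff]
    simpa using (hΔ.sub_const Δ₀).mul_const G₀
  have hlittle : (fun i => G₀ - G i) =o[l] G := by
    simpa using hsub.trans_isLittleO ((isBigO_refl G l).norm_right.mul_isLittleO hfactor)
  -- A perturbation that is small relative to `G` itself forces `G` to be bounded along `l`.
  have hbounded : G =O[l] fun _ => (1 : ℝ) := by
    have hG₀ : G =O[l] fun _ => G₀ := by simpa using hlittle.right_isBigO_add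
    exact hG₀.trans (isBigO_const_const G₀ one_ne_zero l)
  have hzero := (isLittleO_one_iff ℝ).1 (hlittle.trans_isBigO hbounded)
  simpa using hzero.const_sub G₀

section Deriv

variable {𝕜 A : Type*} [NontriviallyNormedField 𝕜] [NormedRing A] [NormedAlgebra 𝕜 A] {s : 𝕜}

theorem IsGreenOperator_s2.hasDerivAt {Δ G : 𝕜 → A} {P Δ' : A}
    (h : ∀ᶠ t in 𝓝 s, IsGreenOperator_s2 (Δ t) P (G t)) (hΔ : HasDerivAt Δ Δ' s) :
    HasDerivAt G (-(G s * Δ' * G s)) s := by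
  have hG : Tendsto G (𝓝 s) (𝓝 (G s)) := h.self_of_nhds.tendsto h hΔ.continuousAt
  rw [hasDerivAt_iff_tendsto_slope] at hΔ ⊢
  refine (((hG.mono_left nhdsWithin_le_nhds).mul hΔ).mul_const (G s)).neg.congr' ?_
  filter_upwards [h.filter_mono nhdsWithin_le_nhds] with t ht
  rw [slope_def_module, slope_def_module, mul_smul_comm, smul_mul_assoc, ← smul_neg,
    ← h.self_of_nhds.sub_eq_mul_sub_mul_s2 ht, neg_sub]

theorem hasDerivAt_hodgeLaplacian {δ : 𝕜 → A} {δ' : A} (d : A) (hδ : HasDerivAt δ δ' s) :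
    HasDerivAt (fun t => hodgeLaplacian d (δ t)) (hodgeLaplacian d δ') s :=
  (hδ.const_mul d).add (hδ.mul_const d)

theorem commute_of_hasDerivAt {a f' : A} {f : 𝕜 → A} (hf : HasDerivAt f f' s)
    (h : ∀ᶠ t in 𝓝 s, Commute a (f t)) : Commute a f' :=
  (hf.const_mul a).unique ((hf.mul_const a).congr_of_eventuallyEq h)

theorem stmt_2_general {d P V : A} {δ G : 𝕜 → A} (hδ : HasDerivAt δ ⁅δ s, V⁆ s)
    (hδδ : ∀ᶠ t in 𝓝 s, δ t * δ t = 0)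
    (hG : ∀ᶠ t in 𝓝 s, IsGreenOperator_s2 (hodgeLaplacian d (δ t)) P (G t))
    (hGd : Commute (G s) d) (hGδ : ∀ᶠ t in 𝓝 s, Commute (G t) (δ t)) :
    HasDerivAt (fun t => δ t * G t) (-⁅d, G s * (δ s * V * δ s) * G s⁆) s := by
  have hPδ : ∀ᶠ t in 𝓝 s, Commute P (δ t) := by
    filter_upwards [hδδ, hG, hGδ] with t hδδt hGt hGδt
    exact hGt.commute_proj (commute_hodgeLaplacian_of_mul_self_eq_zero hδδt) hGδt
  have hG' := IsGreenOperator_s2.hasDerivAt hG (hasDerivAt_hodgeLaplacian d hδ)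
  refine (hδ.mul hG').congr_deriv ?_
  rw [mul_neg, ← sub_eq_add_neg, hG.self_of_nhds.mul_sub_mul_hodgeLaplacian_mul hGd
      hGδ.self_of_nhds (commute_of_hasDerivAt hδ hPδ),
    mul_lie_self_of_mul_self_eq_zero hδδ.self_of_nhds, Ring.lie_def, Ring.lie_def]
  noncomm_ring

end Deriv

/-- Abstract form of the second Lemma of Section 2 of Lott,
"On the Spectrum of a Finite-Volume Negatively-Curved Manifold":
`∂_s (d̂* G) = −[d̂, G d̂* V d̂* G]`, where `d` is a fixed operator with
`d² = 0`, `dstar s` its `s`-dependent adjoint with `(dstar s)² = 0` and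
`∂_s dstar = [dstar, V]`, `Δ s = d ∘ dstar s + dstar s ∘ d`, `P` a fixed
projection, and `G` the Green's operator: `ΔG = GΔ = 1 − P`, `PG = GP = 0`. -/
theorem stmt_2 {E : Type*} [NormedAddCommGroup E] [NormedSpace ℝ E]
    [CompleteSpace E]
    (d P : E →L[ℝ] E) (dstar G V : ℝ → (E →L[ℝ] E))
    (hdstar : Differentiable ℝ dstar) (hG : Differentiable ℝ G)
    (hd2 : d.comp d = 0)
    (hdstar2 : ∀ s, (dstar s).comp (dstar s) = 0)
    (hΔG : ∀ s, (d.comp (dstar s) + (dstar s).comp d).comp (G s) = 1 - P)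
    (hGΔ : ∀ s, (G s).comp (d.comp (dstar s) + (dstar s).comp d) = 1 - P)
    (hPG : ∀ s, P.comp (G s) = 0)
    (hGP : ∀ s, (G s).comp P = 0)
    (hGd : ∀ s, (G s).comp d = d.comp (G s))
    (hGdstar : ∀ s, (G s).comp (dstar s) = (dstar s).comp (G s))
    (hPdstar : ∀ s, P.comp (dstar s) = (dstar s).comp P)
    (hPV : ∀ s, P.comp (V s) = (V s).comp P)
    (hdstarderiv : ∀ s, deriv dstar s =
      (dstar s).comp (V s) - (V s).comp (dstar s)) :
    ∀ s, deriv (fun t => (dstar t).comp (G t)) s =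
      -(d.comp ((G s).comp ((dstar s).comp ((V s).comp ((dstar s).comp (G s)))))
        - ((G s).comp ((dstar s).comp ((V s).comp ((dstar s).comp (G s))))).comp d) := by
  intro s
  have hδ : HasDerivAt dstar ⁅dstar s, V s⁆ s :=
    (hdstar s).hasDerivAt.congr_deriv (hdstarderiv s)
  have h := stmt_2_general hδ (.of_forall hdstar2)
    (.of_forall fun t => ⟨hΔG t, hGΔ t, hPG t⟩) (hGd s) (.of_forall hGdstar)
  simpa only [Ring.lie_def, ContinuousLinearMap.mul_def, ContinuousLinearMap.comp_assoc]
    using h.deriv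
end

section
/- Let E be a real Banach space. Let d, P : E →L[ℝ] E be fixed continuous linear operators, and let dstar, G, W : ℝ → (E →L[ℝ] E) be operator-valued functions with dstar ∘ G (the function s ↦ dstar s ∘ G s) differentiable in operator norm. For each s put Δ s = d ∘ dstar s + dstar s ∘ d. Assume that for every s: (i) Δ s ∘ G s = 1 − P; (ii) G s commutes with d; (iii) deriv (fun t => dstar t ∘ G t) s = −(d ∘ W s − W s ∘ d). For differentiable functions ω, η : ℝ → E define 𝒟(ω, η) = (s ↦ d (ω s), s ↦ deriv ω s − d (η s)) and 𝒦(ω, η) = (s ↦ dstar s (G s (ω s)), s ↦ −(W s) (ω s) − dstar s (G s (η s))). Then for all differentiable ω, η : ℝ → E, 𝒟(𝒦(ω, η)) + 𝒦(𝒟(ω, η)) = (s ↦ (1 − P)(ω s), s ↦ (1 − P)(η s)). -/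
/-- The total exterior derivative `𝒟 = d̂ + e(ds) ∂_s` in the two-component model:
a form on `[0,∞) × N` is the pair `(ω, η)` corresponding to `ω + ds ∧ η`. -/
noncomputable def Dop {E : Type*} [NormedAddCommGroup E] [NormedSpace ℝ E]
    (d : E →L[ℝ] E) (p : (ℝ → E) × (ℝ → E)) : (ℝ → E) × (ℝ → E) :=
  (fun s => d (p.1 s), fun s => deriv p.1 s - d (p.2 s))

/-- The homotopy operator `𝒦 = d̂* G − e(ds) W` with `W = G d̂* V d̂* G`. -/
noncomputable def Kop {E : Type*} [NormedAddCommGroup E] [NormedSpace ℝ E]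
    (dstar G W : ℝ → (E →L[ℝ] E)) (p : (ℝ → E) × (ℝ → E)) : (ℝ → E) × (ℝ → E) :=
  (fun s => dstar s (G s (p.1 s)), fun s => -(W s (p.1 s)) - dstar s (G s (p.2 s)))

/-!
Write `H = d̂* G`. In `𝒟𝒦 + 𝒦𝒟` the two terms `H (∂_s ω)` cancel, so the anticommutator acts on
both components by the fiberwise `d̂ H + H d̂`, up to the term `(∂_s H + [d̂, W]) ω` in the `ds`
component. The operator `W` is chosen to make that term vanish, and since `G` commutes with `d̂`,
`d̂ H + H d̂ = Δ G = 1 - P`.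
-/

theorem anticommutator_mul_right_of_commute {R : Type*} [NonUnitalSemiring R] {a b g : R}
    (h : Commute g a) : a * (b * g) + b * g * a = (a * b + b * a) * g := by
  rw [mul_assoc b g a, h.eq, add_mul, mul_assoc, mul_assoc]

section HomotopyFormula

variable {E : Type*} [NormedAddCommGroup E] [NormedSpace ℝ E]
  (d : E →L[ℝ] E) (dstar G W : ℝ → (E →L[ℝ] E))

theorem Dop_Kop_add_Kop_Dop {ω : ℝ → E} (η : ℝ → E)
    (hH : Differentiable ℝ (fun s => (dstar s).comp (G s))) (hω : Differentiable ℝ ω) :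
    Dop d (Kop dstar G W (ω, η)) + Kop dstar G W (Dop d (ω, η)) =
      (fun s => (d.comp ((dstar s).comp (G s)) + ((dstar s).comp (G s)).comp d) (ω s),
        fun s => (d.comp ((dstar s).comp (G s)) + ((dstar s).comp (G s)).comp d) (η s) +
          (deriv (fun t => (dstar t).comp (G t)) s +
            (d.comp (W s) - (W s).comp d)) (ω s)) := by
  refine Prod.ext rfl (funext fun s => ?_)
  have leibniz : deriv (fun t => dstar t (G t (ω t))) s =
      deriv (fun t => (dstar t).comp (G t)) s (ω s) + dstar s (G s (deriv ω s)) :=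
    deriv_clm_apply (hH s) (hω s)
  simp only [Dop, Kop, Prod.mk_add_mk, Pi.add_apply, leibniz, map_sub, map_neg,
    add_apply, sub_apply, ContinuousLinearMap.comp_apply]
  abel

theorem stmt_3_general (P : ℝ → (E →L[ℝ] E))
    (hdiff : Differentiable ℝ (fun s => (dstar s).comp (G s)))
    (hi : ∀ s, (d.comp (dstar s) + (dstar s).comp d).comp (G s) = 1 - P s)
    (hii : ∀ s, (G s).comp d = d.comp (G s))
    (hiii : ∀ s, deriv (fun t => (dstar t).comp (G t)) s =
      -(d.comp (W s) - (W s).comp d))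
    {ω : ℝ → E} (η : ℝ → E) (hω : Differentiable ℝ ω) :
    Dop d (Kop dstar G W (ω, η)) + Kop dstar G W (Dop d (ω, η)) =
      (fun s => ω s - P s (ω s), fun s => η s - P s (η s)) := by
  have fiberwise_homotopy (s : ℝ) :
      d.comp ((dstar s).comp (G s)) + ((dstar s).comp (G s)).comp d = 1 - P s :=
    (anticommutator_mul_right_of_commute (hii s)).trans (hi s)
  rw [Dop_Kop_add_Kop_Dop d dstar G W η hdiff hω]
  simp only [fiberwise_homotopy, hiii, neg_add_cancel, zero_apply, add_zero,
    sub_apply, one_apply_eq_self]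

end HomotopyFormula

/-- Homotopy formula `𝒟 𝒦 + 𝒦 𝒟 = 1 − P` (third Lemma of Section 2 of Lott,
"On the Spectrum of a Finite-Volume Negatively-Curved Manifold"). -/
theorem stmt_3 {E : Type*} [NormedAddCommGroup E] [NormedSpace ℝ E]
    [CompleteSpace E]
    (d P : E →L[ℝ] E) (dstar G W : ℝ → (E →L[ℝ] E))
    (hdiff : Differentiable ℝ (fun s => (dstar s).comp (G s)))
    (hi : ∀ s, (d.comp (dstar s) + (dstar s).comp d).comp (G s) = 1 - P)
    (hii : ∀ s, (G s).comp d = d.comp (G s))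
    (hiii : ∀ s, deriv (fun t => (dstar t).comp (G t)) s =
      -(d.comp (W s) - (W s).comp d)) :
    ∀ ω η : ℝ → E, Differentiable ℝ ω → Differentiable ℝ η →
      Dop d (Kop dstar G W (ω, η)) + Kop dstar G W (Dop d (ω, η)) =
        (fun s => ω s - P (ω s), fun s => η s - P (η s)) := by
  intro ω η hω _
  exact stmt_3_general d dstar G W (fun _ => P) hdiff hi hii hiii η hω
end

section
/- Let v : ℝ → ℝ be twice continuously differentiable with v s > 0 for all s, and let f : ℝ → ℝ be continuously differentiable, compactly supported, with f 0 = 0. Put k s = Real.sqrt (v s) * f s and L s = Real.log (v s). Then ∫ s in Set.Ioi (0:ℝ), (deriv f s)^2 * v s = ∫ s in Set.Ioi (0:ℝ), ((deriv k s)^2 + ((1/2) * deriv (deriv L) s + (1/4) * (deriv L s)^2) * (k s)^2). -/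
/-! With `q = √v` and `k = q f` one has `½ L'' + ¼ (L')² = q'' / q`, so the two integrands differ by
a total derivative: `|k'|² + (q'' / q) |k|² = v |f'|² + (q q' |f|²)'`. As `q q' = ½ v'`,
integration leaves only the boundary term `½ v' |f|²`, which involves neither `q` nor `L` and is
therefore `C¹` even where `v` vanishes. -/

open Filter MeasureTheory Set
open scoped RealInnerProductSpace Topology

section

variable {v : ℝ → ℝ} {s : ℝ}

/-- The potential `½ (ln v)'' + ¼ ((ln v)')²` of the Schrödinger operator that is
unitarily equivalent to the Laplacian with weight `v`, meaningful where `v` is positive and twice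
differentiable. -/
noncomputable def schrodingerPotential (v : ℝ → ℝ) (s : ℝ) : ℝ :=
  (1 / 2) * deriv (deriv fun t => Real.log (v t)) s +
    (1 / 4) * (deriv (fun t => Real.log (v t)) s) ^ 2

theorem deriv_deriv_log_comp (hv : ∀ᶠ t in 𝓝 s, DifferentiableAt ℝ v t)
    (hv' : DifferentiableAt ℝ (deriv v) s) (hs : v s ≠ 0) :
    deriv (deriv fun t => Real.log (v t)) s =
      (deriv (deriv v) s * v s - deriv v s * deriv v s) / v s ^ 2 := by
  have hvs : DifferentiableAt ℝ v s := hv.self_of_nhds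
  have hlog : deriv (fun t => Real.log (v t)) =ᶠ[𝓝 s] fun t => deriv v t / v t := by
    filter_upwards [hv, hvs.continuousAt.eventually_ne hs] with t ht hne
    exact deriv.log ht hne
  rw [hlog.deriv_eq]
  exact (hv'.hasDerivAt.div hvs.hasDerivAt hs).deriv

theorem schrodingerPotential_mul_self (hv : ∀ᶠ t in 𝓝 s, DifferentiableAt ℝ v t)
    (hv' : DifferentiableAt ℝ (deriv v) s) (hs : v s ≠ 0) :
    schrodingerPotential v s * v s =
      (1 / 2) * deriv (deriv v) s - deriv v s ^ 2 / (4 * v s) := by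
  rw [schrodingerPotential, deriv_deriv_log_comp hv hv' hs, deriv.log hv.self_of_nhds hs]
  field_simp
  ring

variable {E : Type*} [NormedAddCommGroup E] [InnerProductSpace ℝ E] {f : ℝ → E}

theorem norm_sqrt_smul_sq {r : ℝ} (hr : 0 ≤ r) (x : E) : ‖√r • x‖ ^ 2 = r * ‖x‖ ^ 2 := by
  rw [norm_smul, mul_pow, Real.norm_eq_abs, sq_abs, Real.sq_sqrt hr]

theorem norm_deriv_sqrt_smul_sq (hv : DifferentiableAt ℝ v s) (hs : 0 < v s)
    (hf : DifferentiableAt ℝ f s) :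
    ‖deriv (fun t => √(v t) • f t) s‖ ^ 2 =
      ‖deriv f s‖ ^ 2 * v s + deriv v s * ⟪f s, deriv f s⟫ +
        deriv v s ^ 2 / (4 * v s) * ‖f s‖ ^ 2 := by
  have hk : deriv (fun t => √(v t) • f t) s =
      √(v s) • deriv f s + (deriv v s / (2 * √(v s))) • f s :=
    ((hv.hasDerivAt.sqrt hs.ne').smul hf.hasDerivAt).deriv
  have hq : √(v s) ≠ 0 := (Real.sqrt_pos.mpr hs).ne'
  have hcross : √(v s) * (deriv v s / (2 * √(v s))) = deriv v s / 2 := by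
    field_simp
  have hcoeff : (deriv v s / (2 * √(v s))) ^ 2 = deriv v s ^ 2 / (4 * v s) := by
    rw [div_pow, mul_pow, Real.sq_sqrt hs.le]
    norm_num
  rw [hk, norm_add_sq_real, norm_sqrt_smul_sq hs.le, norm_smul, mul_pow, Real.norm_eq_abs, sq_abs,
    hcoeff, real_inner_smul_left, real_inner_smul_right, real_inner_comm, ← mul_assoc √(v s),
    hcross]
  ring

theorem deriv_half_deriv_mul_norm_sq (hv' : DifferentiableAt ℝ (deriv v) s)
    (hf : DifferentiableAt ℝ f s) :
    deriv (fun t => (1 / 2) * deriv v t * ‖f t‖ ^ 2) s =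
      (1 / 2) * deriv (deriv v) s * ‖f s‖ ^ 2 + deriv v s * ⟪f s, deriv f s⟫ := by
  have h := ((hv'.hasDerivAt.const_mul (1 / 2)).mul hf.hasDerivAt.norm_sq).deriv
  refine h.trans ?_
  ring

theorem norm_deriv_sqrt_smul_sq_add_schrodingerPotential_mul
    (hv : ∀ᶠ t in 𝓝 s, DifferentiableAt ℝ v t) (hv' : DifferentiableAt ℝ (deriv v) s)
    (hs : 0 < v s) (hf : DifferentiableAt ℝ f s) :
    ‖deriv (fun t => √(v t) • f t) s‖ ^ 2 + schrodingerPotential v s * ‖√(v s) • f s‖ ^ 2 =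
      ‖deriv f s‖ ^ 2 * v s + deriv (fun t => (1 / 2) * deriv v t * ‖f t‖ ^ 2) s := by
  rw [norm_deriv_sqrt_smul_sq hv.self_of_nhds hs hf, norm_sqrt_smul_sq hs.le, ← mul_assoc,
    schrodingerPotential_mul_self hv hv' hs.ne', deriv_half_deriv_mul_norm_sq hv' hf]
  ring

theorem integrable_norm_deriv_sq_mul (hv : Continuous v) (hf : ContDiff ℝ 1 f)
    (hfc : HasCompactSupport f) : Integrable fun t => ‖deriv f t‖ ^ 2 * v t := by
  have hsupp : HasCompactSupport fun t => ‖deriv f t‖ ^ 2 :=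
    hfc.deriv.comp_left (g := fun x => ‖x‖ ^ 2) (by simp)
  exact ((hf.continuous_deriv_one.norm.pow 2).mul hv).integrable_of_hasCompactSupport
    hsupp.mul_right

theorem stmt_5_general (a : ℝ) (hv : ContDiff ℝ 2 v) (hvpos : ∀ s > a, 0 < v s)
    (hf : ContDiff ℝ 1 f) (hfc : HasCompactSupport f) :
    ∫ s in Ioi a, ‖deriv f s‖ ^ 2 * v s =
      (∫ s in Ioi a, (‖deriv (fun t => √(v t) • f t) s‖ ^ 2 +
        schrodingerPotential v s * ‖√(v s) • f s‖ ^ 2)) +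
      (1 / 2) * deriv v a * ‖f a‖ ^ 2 := by
  have hv' : ContDiff ℝ 1 (deriv v) := hv.deriv'
  have hB : ContDiff ℝ 1 fun t => (1 / 2) * deriv v t * ‖f t‖ ^ 2 :=
    (contDiff_const.mul hv').mul (hf.norm_sq ℝ)
  have hBc : HasCompactSupport fun t => (1 / 2) * deriv v t * ‖f t‖ ^ 2 :=
    (hfc.comp_left (g := fun x => ‖x‖ ^ 2) (by simp)).mul_left
  have hB'int : Integrable (deriv fun t => (1 / 2) * deriv v t * ‖f t‖ ^ 2) :=
    hB.continuous_deriv_one.integrable_of_hasCompactSupport hBc.deriv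
  have hpointwise := setIntegral_congr_fun (μ := volume) measurableSet_Ioi fun s (hs : s ∈ Ioi a) =>
    norm_deriv_sqrt_smul_sq_add_schrodingerPotential_mul
      (.of_forall (hv.differentiable two_ne_zero)) (hv'.differentiable one_ne_zero s)
      (hvpos s hs) (hf.differentiable one_ne_zero s)
  rw [hpointwise, integral_add
    (integrable_norm_deriv_sq_mul hv.continuous hf hfc).integrableOn hB'int.integrableOn,
    hBc.integral_Ioi_deriv_eq hB a, neg_add_cancel_right]

end

/-- The quadratic-form identity of the Lemma in Section 8 of Lott,
"On the Spectrum of a Finite-Volume Negatively-Curved Manifold":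
with `k = v^{1/2} f` and `L = ln v`,
`∫₀^∞ (f')² v ds = ∫₀^∞ (k')² + (½ L'' + ¼ (L')²) k² ds`. -/
theorem stmt_5 (v f : ℝ → ℝ) (hv : ContDiff ℝ 2 v) (hvpos : ∀ s, 0 < v s)
    (hf : ContDiff ℝ 1 f) (hfc : HasCompactSupport f) (hf0 : f 0 = 0) :
    ∫ s in Set.Ioi (0 : ℝ), (deriv f s) ^ 2 * v s =
      ∫ s in Set.Ioi (0 : ℝ),
        ((deriv (fun t => Real.sqrt (v t) * f t) s) ^ 2 +
          ((1 / 2) * deriv (deriv (fun t => Real.log (v t))) s +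
            (1 / 4) * (deriv (fun t => Real.log (v t)) s) ^ 2) *
          (Real.sqrt (v s) * f s) ^ 2) := by
  simpa [schrodingerPotential, hf0, mul_pow] using
    stmt_5_general 0 hv (fun s _ => hvpos s) hf hfc
end

section
/- Let P : ℝ → ℝ be continuously differentiable and even, i.e. P (−x) = P x for all x ∈ ℝ. Define V : ℝ → ℝ by V x = (1/2) * deriv P x + (1/4) * (P x)^2. If V is real-analytic at every point of ℝ, then P is real-analytic at every point of ℝ. -/
/-! The derivative of an even function is odd, so if `P` and `g` are even then `c • P'` is the odd
part of `c • P' + g`, and the odd part of an analytic function is analytic. It remains to recover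
`P` from its analytic derivative: by the mean value inequality along segments, `P` minus a partial
sum of the term-by-term antiderivative of the power series of `P'` is controlled by `P'` minus a
partial sum of that power series, which tends to zero uniformly on smaller balls. -/

open Filter Metric Topology
open scoped ENNReal NNReal

section Antiderivative

variable {𝕜 E F : Type*} [RCLike 𝕜] [NormedAddCommGroup E] [NormedSpace 𝕜 E]
  [NormedAddCommGroup F] [NormedSpace 𝕜 F]

/-- The term-by-term antiderivative, with constant term `c`, of a power series `p` whose values are
linear maps: its terms on the diagonal are `c` and `p n (y, …, y) y / (n + 1)`. This is how a
function taking the value `c` at the centre is recovered from the power series of its derivative.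
The terms are not symmetrized. -/
noncomputable def antiderivSeries (p : FormalMultilinearSeries 𝕜 E (E →L[𝕜] F)) (c : F) :
    FormalMultilinearSeries 𝕜 E F
  | 0 => p.unshift c 0
  | n + 1 => (n + 1 : 𝕜)⁻¹ • p.unshift c (n + 1)

theorem antiderivSeries_zero_apply (p : FormalMultilinearSeries 𝕜 E (E →L[𝕜] F)) (c : F)
    (v : Fin 0 → E) : antiderivSeries p c 0 v = c :=
  rfl

theorem antiderivSeries_succ_apply_diag (p : FormalMultilinearSeries 𝕜 E (E →L[𝕜] F)) (c : F)
    (n : ℕ) (y : E) :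
    antiderivSeries p c (n + 1) (fun _ ↦ y) = (n + 1 : 𝕜)⁻¹ • p n (fun _ ↦ y) y :=
  rfl

theorem radius_le_radius_antiderivSeries (p : FormalMultilinearSeries 𝕜 E (E →L[𝕜] F)) (c : F) :
    p.radius ≤ (antiderivSeries p c).radius := by
  rw [← p.radius_unshift c]
  refine FormalMultilinearSeries.radius_le_of_le fun n ↦ ?_
  cases n with
  | zero => exact le_rfl
  | succ n =>
    have norm_inv_le_one : ‖(n + 1 : 𝕜)⁻¹‖ ≤ 1 := by
      rw [norm_inv, ← Nat.cast_succ, RCLike.norm_natCast]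
      exact inv_le_one_of_one_le₀ (mod_cast n.succ_pos)
    calc
      ‖antiderivSeries p c (n + 1)‖ ≤ ‖(n + 1 : 𝕜)⁻¹‖ * ‖p.unshift c (n + 1)‖ :=
        norm_smul_le (n + 1 : 𝕜)⁻¹ (p.unshift c (n + 1))
      _ ≤ ‖p.unshift c (n + 1)‖ := mul_le_of_le_one_left (norm_nonneg _) norm_inv_le_one

theorem hasDerivAt_antiderivSeries_succ_smul (p : FormalMultilinearSeries 𝕜 E (E →L[𝕜] F)) (c : F)
    (n : ℕ) (y : E) (t : 𝕜) :
    HasDerivAt (fun s : 𝕜 ↦ antiderivSeries p c (n + 1) (fun _ ↦ s • y))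
      (p n (fun _ ↦ t • y) y) t := by
  have diag_smul (s : 𝕜) : antiderivSeries p c (n + 1) (fun _ ↦ s • y) =
      s ^ (n + 1) • (n + 1 : 𝕜)⁻¹ • p n (fun _ ↦ y) y := by
    rw [(antiderivSeries p c (n + 1)).map_smul_univ (fun _ ↦ s) (fun _ ↦ y), Fin.prod_const,
      antiderivSeries_succ_apply_diag]
  have succ_ne_zero : (n + 1 : 𝕜) ≠ 0 := n.cast_add_one_ne_zero
  simp_rw [diag_smul]
  convert (hasDerivAt_pow (n + 1) t).smul_const ((n + 1 : 𝕜)⁻¹ • p n (fun _ ↦ y) y) using 1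
  rw [(p n).map_smul_univ (fun _ ↦ t) (fun _ ↦ y), Fin.prod_const, smul_apply,
    smul_smul, Nat.add_sub_cancel, Nat.cast_succ, mul_right_comm, mul_inv_cancel₀ succ_ne_zero,
    one_mul]

theorem hasDerivAt_partialSum_antiderivSeries_smul (p : FormalMultilinearSeries 𝕜 E (E →L[𝕜] F))
    (c : F) (n : ℕ) (y : E) (t : 𝕜) :
    HasDerivAt (fun s : 𝕜 ↦ (antiderivSeries p c).partialSum (n + 1) (s • y))
      (p.partialSum n (t • y) y) t := by
  simp only [FormalMultilinearSeries.partialSum, Finset.sum_range_succ', antiderivSeries_zero_apply,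
    sum_apply]
  exact (HasDerivAt.fun_sum fun k _ ↦ hasDerivAt_antiderivSeries_succ_smul p c k y t).add_const c

theorem norm_sub_partialSum_antiderivSeries_le {f : E → F} {f' : E → E →L[𝕜] F} {x y : E} {C : ℝ}
    {n : ℕ} (p : FormalMultilinearSeries 𝕜 E (E →L[𝕜] F))
    (hf : ∀ z ∈ closedBall (0 : E) ‖y‖, HasFDerivAt f (f' (x + z)) (x + z))
    (hC : ∀ z ∈ closedBall (0 : E) ‖y‖, ‖f' (x + z) - p.partialSum n z‖ ≤ C) :
    ‖f (x + y) - (antiderivSeries p (f x)).partialSum (n + 1) y‖ ≤ C * ‖y‖ := by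
  let remainder (t : 𝕜) : F :=
    f (x + t • y) - (antiderivSeries p (f x)).partialSum (n + 1) (t • y)
  have smul_mem {t : 𝕜} (ht : t ∈ closedBall (0 : 𝕜) 1) : t • y ∈ closedBall (0 : E) ‖y‖ := by
    rw [mem_closedBall_zero_iff] at ht ⊢
    exact (norm_smul_le t y).trans (mul_le_of_le_one_left (norm_nonneg y) ht)
  have hasDerivAt_remainder {t : 𝕜} (ht : t ∈ closedBall (0 : 𝕜) 1) :
      HasDerivAt remainder ((f' (x + t • y) - p.partialSum n (t • y)) y) t := by
    have hasDerivAt_line : HasDerivAt (fun s : 𝕜 ↦ x + s • y) y t := by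
      simpa only [one_smul, id] using ((hasDerivAt_id t).smul_const y).const_add x
    exact ((hf _ (smul_mem ht)).comp_hasDerivAt t hasDerivAt_line).sub
      (hasDerivAt_partialSum_antiderivSeries_smul p (f x) n y t)
  have remainder_zero : remainder 0 = 0 := by
    simp [remainder, FormalMultilinearSeries.partialSum, Finset.sum_range_succ',
      antiderivSeries_zero_apply, antiderivSeries_succ_apply_diag]
  have mean_value : ‖remainder 1 - remainder 0‖ ≤ C * ‖y‖ * ‖(1 : 𝕜) - 0‖ :=
    (convex_closedBall (0 : 𝕜) 1).norm_image_sub_le_of_norm_hasDerivWithin_le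
      (fun t ht ↦ (hasDerivAt_remainder ht).hasDerivWithinAt)
      (fun t ht ↦ ContinuousLinearMap.le_of_opNorm_le _ (hC _ (smul_mem ht)) y)
      (by simp) (by simp)
  simpa [remainder_zero, remainder] using mean_value

theorem tendsto_partialSum_antiderivSeries {f : E → F} {f' : E → E →L[𝕜] F}
    {p : FormalMultilinearSeries 𝕜 E (E →L[𝕜] F)} {x y : E}
    (hf : ∀ z ∈ closedBall (0 : E) ‖y‖, HasFDerivAt f (f' (x + z)) (x + z))
    (hp : TendstoUniformlyOn p.partialSum (fun z ↦ f' (x + z)) atTop (closedBall 0 ‖y‖)) :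
    Tendsto (fun n ↦ (antiderivSeries p (f x)).partialSum n y) atTop (𝓝 (f (x + y))) := by
  rw [← tendsto_add_atTop_iff_nat 1, Metric.tendsto_nhds]
  intro ε ε_pos
  have norm_add_one_pos : 0 < ‖y‖ + 1 := by positivity
  filter_upwards [tendstoUniformlyOn_iff.1 hp (ε / (‖y‖ + 1)) (by positivity)] with n hn
  calc
    dist ((antiderivSeries p (f x)).partialSum (n + 1) y) (f (x + y))
      = ‖f (x + y) - (antiderivSeries p (f x)).partialSum (n + 1) y‖ := dist_eq_norm' _ _
    _ ≤ ε / (‖y‖ + 1) * ‖y‖ := norm_sub_partialSum_antiderivSeries_le p hf fun z hz ↦ by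
        simpa only [dist_eq_norm] using (hn z hz).le
    _ < ε / (‖y‖ + 1) * (‖y‖ + 1) := by gcongr; exact lt_add_one _
    _ = ε := div_mul_cancel₀ ε norm_add_one_pos.ne'

theorem hasFPowerSeriesOnBall_antiderivSeries {f : E → F} {f' : E → E →L[𝕜] F}
    {p : FormalMultilinearSeries 𝕜 E (E →L[𝕜] F)} {x : E} {r : ℝ≥0∞}
    (hf : ∀ z ∈ eball x r, HasFDerivAt f (f' z) z) (hp : HasFPowerSeriesOnBall f' p x r) :
    HasFPowerSeriesOnBall f (antiderivSeries p (f x)) x r where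
  r_le := hp.r_le.trans (radius_le_radius_antiderivSeries p (f x))
  r_pos := hp.r_pos
  hasSum {y} hy := by
    have summable_norm := (antiderivSeries p (f x)).summable_norm_apply
      (eball_subset_eball (hp.r_le.trans (radius_le_radius_antiderivSeries p (f x))) hy)
    obtain ⟨ρ, hyρ, hρr⟩ : ∃ ρ : ℝ≥0, ‖y‖ₑ < ρ ∧ (ρ : ℝ≥0∞) < r :=
      ENNReal.lt_iff_exists_nnreal_btwn.1 (mem_eball_zero_iff.1 hy)
    have closedBall_subset_ball : closedBall (0 : E) ‖y‖ ⊆ ball 0 ρ :=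
      Metric.closedBall_subset_ball (by simpa [enorm_eq_nnnorm, ← NNReal.coe_lt_coe] using hyρ)
    have hasFDerivAt_add : ∀ z ∈ closedBall (0 : E) ‖y‖, HasFDerivAt f (f' (x + z)) (x + z) := by
      intro z hz
      have enorm_lt : ‖z‖ₑ < ρ := by
        simpa [← Metric.eball_coe] using closedBall_subset_ball hz
      exact hf _ (by simpa [edist_eq_enorm_sub] using enorm_lt.trans hρr)
    rw [hasSum_iff_tendsto_nat_of_summable_norm summable_norm]
    exact tendsto_partialSum_antiderivSeries hasFDerivAt_add
      ((hp.tendstoUniformlyOn hρr).mono closedBall_subset_ball)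

theorem analyticAt_of_eventually_hasFDerivAt {f : E → F} {f' : E → E →L[𝕜] F} {x : E}
    (hf : ∀ᶠ z in 𝓝 x, HasFDerivAt f (f' z) z) (hf' : AnalyticAt 𝕜 f' x) : AnalyticAt 𝕜 f x := by
  obtain ⟨p, r, hp⟩ := hf'
  obtain ⟨ε, ε_pos, hε⟩ := EMetric.mem_nhds_iff.1 hf
  exact ⟨_, _, hasFPowerSeriesOnBall_antiderivSeries
    (fun z hz ↦ hε (eball_subset_eball (min_le_right r ε) hz))
    (hp.mono (lt_min hp.r_pos ε_pos) (min_le_left r ε))⟩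

theorem analyticAt_of_eventually_hasDerivAt {f f' : 𝕜 → F} {x : 𝕜}
    (hf : ∀ᶠ z in 𝓝 x, HasDerivAt f (f' z) z) (hf' : AnalyticAt 𝕜 f' x) : AnalyticAt 𝕜 f x :=
  analyticAt_of_eventually_hasFDerivAt (hf.mono fun _ hz ↦ hz.hasFDerivAt)
    (((ContinuousLinearMap.toSpanSingletonCLE (𝕜 := 𝕜) (E := F)).analyticAt _).comp hf')

end Antiderivative

section Parity

variable {𝕜 E F : Type*} [NontriviallyNormedField 𝕜] [NormedAddCommGroup E] [NormedSpace 𝕜 E]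
  [NormedAddCommGroup F] [NormedSpace 𝕜 F]

theorem odd_deriv_of_even {f : 𝕜 → F} (hf : f.Even) : (deriv f).Odd := fun x ↦ by
  have deriv_eq := deriv_comp_neg f x
  rw [funext hf] at deriv_eq
  rw [deriv_eq, neg_neg]

theorem analyticAt_of_odd_of_add_even [NeZero (2 : 𝕜)] {f g : E → F} {x : E} (hf : f.Odd)
    (hg : g.Even) (hx : AnalyticAt 𝕜 (f + g) x) (hnegx : AnalyticAt 𝕜 (f + g) (-x)) :
    AnalyticAt 𝕜 f x := by
  have eq_odd_part : f = (2⁻¹ : 𝕜) • (f + g - (f + g) ∘ Neg.neg) := by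
    funext y
    have sub_eq_two_smul : f y + g y - (-f y + g y) = (2 : 𝕜) • f y := by
      rw [two_smul]
      abel
    simp only [Pi.smul_apply, Pi.sub_apply, Pi.add_apply, Function.comp_apply, hf y, hg y,
      sub_eq_two_smul, inv_smul_smul₀ (two_ne_zero (α := 𝕜))]
  rw [eq_odd_part]
  exact (hx.sub (hnegx.comp analyticAt_id.neg)).const_smul

end Parity

theorem stmt_6_general {E : Type*} [NormedAddCommGroup E] [NormedSpace ℝ E] {P g : ℝ → E} {c : ℝ}
    (hc : c ≠ 0) (hP : Differentiable ℝ P) (heven : P.Even) (hg : g.Even)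
    (hV : ∀ x, AnalyticAt ℝ (fun y ↦ c • deriv P y + g y) x) (x : ℝ) : AnalyticAt ℝ P x := by
  have odd_smul_deriv : (c • deriv P).Odd := (odd_deriv_of_even heven).const_smul c
  have analyticAt_smul_deriv : AnalyticAt ℝ (c • deriv P) x :=
    analyticAt_of_odd_of_add_even odd_smul_deriv hg (hV x) (hV (-x))
  have analyticAt_deriv : AnalyticAt ℝ (deriv P) x := by
    simpa only [inv_smul_smul₀ hc] using analyticAt_smul_deriv.const_smul (c := c⁻¹)
  exact analyticAt_of_eventually_hasDerivAt (.of_forall fun y ↦ (hP y).hasDerivAt) analyticAt_deriv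

/-- The key analytic step in the Lemma of Section 8 of Lott,
"On the Spectrum of a Finite-Volume Negatively-Curved Manifold":
if `P` is `C¹` and even and `V = ½ P' + ¼ P²` is real-analytic everywhere,
then `P` is real-analytic everywhere. -/
theorem stmt_6 (P : ℝ → ℝ) (hP : ContDiff ℝ 1 P)
    (heven : ∀ x : ℝ, P (-x) = P x)
    (hV : ∀ x : ℝ, AnalyticAt ℝ
      (fun y => (1 / 2) * deriv P y + (1 / 4) * (P y) ^ 2) x) :
    ∀ x : ℝ, AnalyticAt ℝ P x :=
  stmt_6_general (g := fun y ↦ 1 / 4 * P y ^ 2) one_half_pos.ne' (hP.differentiable one_ne_zero)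
    heven (fun y ↦ by simp only [heven y]) hV
end

section
/- Let H be a complex Hilbert space, let T, S : H →L[ℂ] H be selfadjoint with S ∘ S = T, and suppose there is μ > 0 such that for all x ∈ H, μ * ‖x‖^2 ≤ re ⟪T x, x⟫. Let c be a real number with 0 ≤ c < μ. Then T − c • 1 is invertible and ‖S ∘ (T − c • 1)⁻¹‖ ≤ Real.sqrt μ / (μ − c). -/
open scoped InnerProductSpace

/-!
Put `s = √μ` and `A = S†S`, so that `‖S y‖² = re ⟪A y, y⟫`. Coercivity of `A - c` gives
invertibility (Lax–Milgram). For the norm, Cauchy–Schwarz gives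
`‖S y‖² - c ‖y‖² ≤ ‖(A - c) y‖ ‖y‖`. With `a = ‖S y‖` and `b = ‖y‖`, the quantity
`s (a² - c b²) - (s² - c) a b = (s a + c b) (a - s b)` is nonnegative because `s b ≤ a` and
`-s² ≤ c`; dividing by `b` yields `(s² - c) ‖S y‖ ≤ s ‖(A - c) y‖`.
-/

section ShiftedOperator

open RCLike
open scoped InnerProduct

variable {𝕜 H K : Type*} [RCLike 𝕜]
  [NormedAddCommGroup H] [InnerProductSpace 𝕜 H]
  [NormedAddCommGroup K] [InnerProductSpace 𝕜 K]

theorem sq_sub_mul_le_mul_of_sq_sub_mul_sq_le {s a b r c : ℝ} (hs : 0 ≤ s) (hb : 0 < b)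
    (hc : -s ^ 2 ≤ c) (hsb : s * b ≤ a) (h : a ^ 2 - c * b ^ 2 ≤ r * b) :
    (s ^ 2 - c) * a ≤ s * r := by
  have hfactor : 0 ≤ s * a + c * b := by
    calc 0 ≤ (s ^ 2 + c) * b := mul_nonneg (by linarith) hb.le
      _ = s * (s * b) + c * b := by ring
      _ ≤ s * a + c * b := by gcongr
  have hproduct : 0 ≤ (s * a + c * b) * (a - s * b) := mul_nonneg hfactor (sub_nonneg.2 hsb)
  refine le_of_mul_le_mul_right ?_ hb
  calc (s ^ 2 - c) * a * b = s * (a ^ 2 - c * b ^ 2) - (s * a + c * b) * (a - s * b) := by ring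
    _ ≤ s * (a ^ 2 - c * b ^ 2) := sub_le_self _ hproduct
    _ ≤ s * (r * b) := by gcongr
    _ = s * r * b := (mul_assoc ..).symm

theorem re_inner_sub_ofReal_smul_one_apply (T : H →L[𝕜] H) (c : ℝ) (x : H) :
    re ⟪(T - (c : 𝕜) • 1) x, x⟫_𝕜 = re ⟪T x, x⟫_𝕜 - c * ‖x‖ ^ 2 := by
  simp only [sub_apply, smul_apply, one_apply_eq_self, inner_sub_left, inner_smul_left,
    conj_ofReal, map_sub, re_ofReal_mul, inner_self_eq_norm_sq]

theorem isUnit_sub_ofReal_smul_one_of_coercive [CompleteSpace H] {T : H →L[𝕜] H} {μ c : ℝ}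
    (hT : ∀ x, μ * ‖x‖ ^ 2 ≤ re ⟪T x, x⟫_𝕜) (hcμ : c < μ) :
    IsUnit (T - (c : 𝕜) • 1) := by
  refine ContinuousLinearMap.isUnit_of_forall_le_norm_inner_map _
    (c := ⟨μ - c, (sub_pos.2 hcμ).le⟩) (sub_pos.2 hcμ) fun x ↦ ?_
  calc ‖x‖ ^ 2 * (μ - c) = μ * ‖x‖ ^ 2 - c * ‖x‖ ^ 2 := by ring
    _ ≤ re ⟪T x, x⟫_𝕜 - c * ‖x‖ ^ 2 := sub_le_sub_right (hT x) _
    _ = re ⟪(T - (c : 𝕜) • 1) x, x⟫_𝕜 := (re_inner_sub_ofReal_smul_one_apply T c x).symm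
    _ ≤ ‖⟪(T - (c : 𝕜) • 1) x, x⟫_𝕜‖ := re_le_norm _

variable [CompleteSpace H] [CompleteSpace K]

theorem norm_apply_sq_sub_le_norm_adjoint_comp_self_sub_smul (S : H →L[𝕜] K) (c : ℝ) (x : H) :
    ‖S x‖ ^ 2 - c * ‖x‖ ^ 2 ≤ ‖(S† ∘L S - (c : 𝕜) • 1) x‖ * ‖x‖ := by
  rw [S.apply_norm_sq_eq_inner_adjoint_left, ← re_inner_sub_ofReal_smul_one_apply]
  exact re_inner_le_norm _ _

theorem mul_norm_apply_le_norm_adjoint_comp_self_sub_smul (S : H →L[𝕜] K) {s c : ℝ} {x : H}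
    (hs : 0 ≤ s) (hc : -s ^ 2 ≤ c) (hx : s * ‖x‖ ≤ ‖S x‖) :
    (s ^ 2 - c) * ‖S x‖ ≤ s * ‖(S† ∘L S - (c : 𝕜) • 1) x‖ := by
  rcases eq_or_ne x 0 with rfl | hx0
  · simp
  · exact sq_sub_mul_le_mul_of_sq_sub_mul_sq_le hs (norm_pos_iff.2 hx0) hc hx
      (norm_apply_sq_sub_le_norm_adjoint_comp_self_sub_smul S c x)

theorem sqrt_mul_norm_le_norm_apply {S : H →L[𝕜] K} {μ : ℝ} {x : H}
    (hx : μ * ‖x‖ ^ 2 ≤ re ⟪(S† ∘L S) x, x⟫_𝕜) : √μ * ‖x‖ ≤ ‖S x‖ := by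
  rw [← S.apply_norm_sq_eq_inner_adjoint_left] at hx
  calc √μ * ‖x‖ = √(μ * ‖x‖ ^ 2) := by
        rw [Real.sqrt_mul' _ (sq_nonneg _), Real.sqrt_sq (norm_nonneg x)]
    _ ≤ ‖S x‖ := Real.sqrt_le_left (norm_nonneg _) |>.2 hx

theorem stmt_10_general {T : H →L[𝕜] H} {S : H →L[𝕜] K} (hST : S† ∘L S = T) {μ c : ℝ}
    (hlow : ∀ x, μ * ‖x‖ ^ 2 ≤ re ⟪T x, x⟫_𝕜) (hc : -μ ≤ c) (hcμ : c < μ) :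
    ∃ Tinv : H →L[𝕜] H,
      (T - (c : 𝕜) • 1) * Tinv = 1 ∧ Tinv * (T - (c : 𝕜) • 1) = 1 ∧
      ‖S ∘L Tinv‖ ≤ √μ / (μ - c) := by
  subst hST
  obtain ⟨Tinv, hright, hleft⟩ :=
    isUnit_iff_exists.1 (isUnit_sub_ofReal_smul_one_of_coercive hlow hcμ)
  have hsq : √μ ^ 2 = μ := Real.sq_sqrt (by linarith)
  have hgap : 0 < μ - c := sub_pos.2 hcμ
  refine ⟨Tinv, hright, hleft, ContinuousLinearMap.opNorm_le_bound _ (by positivity) fun x ↦ ?_⟩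
  have hx : (S† ∘L S - (c : 𝕜) • 1) (Tinv x) = x := DFunLike.congr_fun hright x
  have hbound := mul_norm_apply_le_norm_adjoint_comp_self_sub_smul S (c := c) (Real.sqrt_nonneg μ)
    (by rwa [hsq]) (sqrt_mul_norm_le_norm_apply (hlow (Tinv x)))
  rw [hsq, hx] at hbound
  rw [div_mul_eq_mul_div, le_div_iff₀' hgap]
  exact hbound

end ShiftedOperator

/-- Abstract form of the bound on `𝒯 = λ₀ (Δ̂ − λ₀²)⁻¹ d̂*` in Proposition 3
(Section 6) of Lott, "On the Spectrum of a Finite-Volume Negatively-Curved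
Manifold": if `T`, `S` are selfadjoint with `S² = T`, `⟪Tx, x⟫ ≥ μ ‖x‖²`,
`μ > 0`, and `0 ≤ c < μ`, then `T − c·1` is invertible and
`‖S (T − c·1)⁻¹‖ ≤ √μ/(μ − c)`. -/
theorem stmt_10 {H : Type*} [NormedAddCommGroup H] [InnerProductSpace ℂ H]
    [CompleteSpace H]
    (T S : H →L[ℂ] H) (hT : IsSelfAdjoint T) (hS : IsSelfAdjoint S)
    (hS2 : S * S = T)
    (μ : ℝ) (hμ : 0 < μ)
    (hlow : ∀ x : H, μ * ‖x‖ ^ 2 ≤ (⟪T x, x⟫_ℂ).re)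
    (c : ℝ) (hc0 : 0 ≤ c) (hcμ : c < μ) :
    ∃ Tinv : H →L[ℂ] H,
      (T - (c : ℂ) • 1) * Tinv = 1 ∧ Tinv * (T - (c : ℂ) • 1) = 1 ∧
      ‖S * Tinv‖ ≤ Real.sqrt μ / (μ - c) := by
  exact stmt_10_general (by rw [hS.adjoint_eq]; exact hS2) hlow (by linarith) hcμ
end
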